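/- arXiv:1902.04071 — 2 statements merged into one kernel-verified Lean document; each statement's English description precedes it below -/
import Mathlib

section
/- The algebra R_n with basis {e₁,…,e_n, f₁,…,f_k, y₁,…,y_{k+1}} and non-zero products [eᵢ,f₁] = e_{i+1} (1 ≤ i ≤ n-k), [e₁,fᵢ] = e_{n-k+i} (2 ≤ i ≤ k), [fᵢ,yᵢ] = fᵢ = -[yᵢ,fᵢ] (1 ≤ i ≤ k), [eᵢ,y_{k+1}] = eᵢ (1 ≤ i ≤ n), [eᵢ,y₁] = (i-1)eᵢ (1 ≤ i ≤ n-k+1), [e_{n-k+i},yᵢ] = e_{n-k+i} (2 ≤ i ≤ k), is a solvable Leibniz algebra. -/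
noncomputable section

open Finset

/-- Underlying space of `R_n`: basis `e₁,…,e_n`, `f₁,…,f_k`, `y₁,…,y_{k+1}`. -/
abbrev LR (n k : ℕ) := (Fin n ⊕ (Fin k ⊕ Fin (k + 1))) → ℂ

/-- `1`-indexed basis vector `eᵢ` (zero out of range). -/
def Eb (n k : ℕ) (i : ℕ) : LR n k := fun s =>
  match s with
  | .inl a => if (a : ℕ) + 1 = i then 1 else 0
  | _ => 0

/-- `1`-indexed basis vector `fᵢ` (zero out of range). -/
def Fb (n k : ℕ) (i : ℕ) : LR n k := fun s =>
  match s with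
  | .inr (.inl a) => if (a : ℕ) + 1 = i then 1 else 0
  | _ => 0

/-- `1`-indexed basis vector `yᵢ` (zero out of range). -/
def Yb (n k : ℕ) (i : ℕ) : LR n k := fun s =>
  match s with
  | .inr (.inr a) => if (a : ℕ) + 1 = i then 1 else 0
  | _ => 0

/-- Structure constants of `R_n`:
`[eᵢ,f₁] = e_{i+1}` (1 ≤ i ≤ n-k), `[e₁,fᵢ] = e_{n-k+i}` (2 ≤ i ≤ k),
`[fᵢ,yᵢ] = fᵢ = -[yᵢ,fᵢ]` (1 ≤ i ≤ k), `[eᵢ,y_{k+1}] = eᵢ` (1 ≤ i ≤ n),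
`[eᵢ,y₁] = (i-1)eᵢ` (1 ≤ i ≤ n-k+1), `[e_{n-k+i},yᵢ] = e_{n-k+i}` (2 ≤ i ≤ k). -/
def cR (n k : ℕ) :
    (Fin n ⊕ (Fin k ⊕ Fin (k + 1))) → (Fin n ⊕ (Fin k ⊕ Fin (k + 1))) → LR n k
  | .inl a, .inr (.inl b) =>
      (if (b : ℕ) = 0 ∧ (a : ℕ) + 1 ≤ n - k then Eb n k ((a : ℕ) + 2) else 0)
      + (if (a : ℕ) = 0 ∧ 1 ≤ (b : ℕ) then Eb n k (n - k + (b : ℕ) + 1) else 0)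
  | .inr (.inl a), .inr (.inr b) =>
      if (a : ℕ) = (b : ℕ) then Fb n k ((a : ℕ) + 1) else 0
  | .inr (.inr a), .inr (.inl b) =>
      if (a : ℕ) = (b : ℕ) then -Fb n k ((b : ℕ) + 1) else 0
  | .inl a, .inr (.inr b) =>
      (if (b : ℕ) = k then Eb n k ((a : ℕ) + 1) else 0)
      + (if (b : ℕ) = 0 ∧ (a : ℕ) + 1 ≤ n - k + 1 then ((a : ℕ) : ℂ) • Eb n k ((a : ℕ) + 1) else 0)
      + (if 1 ≤ (b : ℕ) ∧ (b : ℕ) + 1 ≤ k ∧ (a : ℕ) + 1 = n - k + (b : ℕ) + 1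
          then Eb n k ((a : ℕ) + 1) else 0)
  | _, _ => 0

/-- Bracket of `R_n`. -/
def brkR (n k : ℕ) (x y : LR n k) : LR n k :=
  ∑ i, ∑ j, (x i * y j) • cR n k i j

/-- Derived series of `R_n`: `D 0 = R_n`, `D (s+1) = [D s, D s]`. -/
def derR (n k : ℕ) : ℕ → Submodule ℂ (LR n k)
  | 0 => ⊤
  | s + 1 => Submodule.span ℂ
      {z | ∃ u ∈ derR n k s, ∃ v ∈ derR n k s, z = brkR n k u v}

open scoped Matrix

/-!
The `f`'s and `y`'s span a Lie algebra `L`, namely `k` copies of the nonabelian Lie algebra of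
dimension two together with the central element `y_{k+1}`. The `e`'s span an ideal `E` on which `L`
acts from the right, the `y`'s by weights and the `f`'s by commuting shifts, while multiplying by an
element of `E` on the right gives zero. Thus the Leibniz identity is the Jacobi identity on the
coordinates in `L` and the identity `v·[y, z] = (v·y)·z - (v·z)·y` of a right `L`-module on the
coordinates in `E`. Brackets have no `y`-part, brackets of elements without `y`-part lie in `E`, and
`[E, E] = 0`, so the third derived algebra vanishes.
-/

/-- The index set of the basis of `R_n`: the three summands label the `e`'s, the `f`'s and
the `y`'s, each counted from `0`, so that `e₁` has index `inl 0`. -/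
abbrev IR (n k : ℕ) := Fin n ⊕ (Fin k ⊕ Fin (k + 1))

/-- The matrix of the bilinear form sending `x`, `y` to the coordinate of `[x, y]` at `t`. -/
def coordMatrix (n k : ℕ) (t : IR n k) : Matrix (IR n k) (IR n k) ℂ :=
  .of fun i j => cR n k i j t

variable {n k : ℕ}

theorem brkR_apply (x y : LR n k) (t : IR n k) :
    brkR n k x y t = x ⬝ᵥ coordMatrix n k t *ᵥ y := by
  simp only [brkR, coordMatrix, dotProduct, Matrix.mulVec, Matrix.of_apply, Finset.sum_apply,
    Pi.smul_apply, smul_eq_mul, Finset.mul_sum]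
  exact Finset.sum_congr rfl fun i _ => Finset.sum_congr rfl fun j _ => by ring

theorem dotProduct_single_mulVec {ι κ R : Type*} [Fintype ι] [Fintype κ] [DecidableEq ι]
    [DecidableEq κ] [CommSemiring R] (i : ι) (j : κ) (c : R) (x : ι → R) (y : κ → R) :
    x ⬝ᵥ Matrix.single i j c *ᵥ y = c * (x i * y j) := by
  rw [Matrix.single_mulVec, ← Pi.single, dotProduct_single]
  ring

theorem brkR_apply_y (x y : LR n k) (j : Fin (k + 1)) : brkR n k x y (.inr (.inr j)) = 0 := by
  have h : coordMatrix n k (.inr (.inr j)) = 0 := by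
    ext (a | a | a) (b | b | b) <;> simp [coordMatrix, cR, Eb, Fb, ite_apply]
  simp [brkR_apply, h]

theorem brkR_apply_f (x y : LR n k) (i : Fin k) :
    brkR n k x y (.inr (.inl i)) =
      x (.inr (.inl i)) * y (.inr (.inr i.castSucc)) -
        x (.inr (.inr i.castSucc)) * y (.inr (.inl i)) := by
  have h : coordMatrix n k (.inr (.inl i)) =
      .single (.inr (.inl i)) (.inr (.inr i.castSucc)) 1 -
        .single (.inr (.inr i.castSucc)) (.inr (.inl i)) 1 := by
    ext (a | a | a) (b | b | b) <;>
      simp only [coordMatrix, cR, Eb, Fb, ite_apply, Matrix.of_apply, Matrix.single_apply,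
        Matrix.sub_apply, Pi.zero_apply, Pi.neg_apply, Pi.add_apply, Pi.smul_apply, smul_eq_mul,
        Sum.inl.injEq, Sum.inr.injEq, reduceCtorEq, Fin.ext_iff] <;> grind
  simp [brkR_apply, h, Matrix.sub_mulVec, dotProduct_single_mulVec]

theorem brkR_apply_e_zero [NeZero n] (x y : LR n k) :
    brkR n k x y (.inl 0) = x (.inl 0) * y (.inr (.inr (.last k))) := by
  have h : coordMatrix n k (.inl 0) = .single (.inl 0) (.inr (.inr (.last k))) 1 := by
    have cast_index_zero : (((0 : Fin n) : ℕ) : ℂ) = 0 := by simp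
    ext (a | a | a) (b | b | b) <;>
      simp only [coordMatrix, cR, Eb, Fb, ite_apply, Matrix.of_apply, Matrix.single_apply,
        Pi.zero_apply, Pi.neg_apply, Pi.add_apply, Pi.smul_apply, smul_eq_mul,
        Sum.inl.injEq, Sum.inr.injEq, reduceCtorEq, Fin.ext_iff] <;> grind
  simp [brkR_apply, h, dotProduct_single_mulVec]

theorem brkR_apply_e_succ [NeZero k] {a b : Fin n} (hab : (b : ℕ) = a + 1)
    (hb : (b : ℕ) ≤ n - k) (x y : LR n k) :
    brkR n k x y (.inl b) =
      x (.inl b) * (y (.inr (.inr (.last k))) + b * y (.inr (.inr 0))) +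
        x (.inl a) * y (.inr (.inl 0)) := by
  have h : coordMatrix n k (.inl b) =
      .single (.inl b) (.inr (.inr (.last k))) 1 + .single (.inl b) (.inr (.inr 0)) (b : ℂ) +
        .single (.inl a) (.inr (.inl 0)) 1 := by
    ext (c | c | c) (d | d | d) <;>
      simp only [coordMatrix, cR, Eb, Fb, ite_apply, Matrix.of_apply, Matrix.single_apply,
        Matrix.add_apply, Pi.zero_apply, Pi.neg_apply, Pi.add_apply, Pi.smul_apply, smul_eq_mul,
        Sum.inl.injEq, Sum.inr.injEq, reduceCtorEq, Fin.ext_iff] <;> grind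
  simp only [brkR_apply, h, Matrix.add_mulVec, dotProduct_add, dotProduct_single_mulVec, one_mul]
  ring

theorem brkR_apply_e_tail [NeZero n] [NeZero k] (hkn : k ≤ n) {i : Fin k} (hi : i ≠ 0)
    (x y : LR n k) :
    brkR n k x y (.inl ⟨n - k + i, by omega⟩) =
      x (.inl ⟨n - k + i, by omega⟩) * (y (.inr (.inr (.last k))) + y (.inr (.inr i.castSucc))) +
        x (.inl 0) * y (.inr (.inl i)) := by
  have h : coordMatrix n k (.inl ⟨n - k + i, by omega⟩) =
      .single (.inl ⟨n - k + i, by omega⟩) (.inr (.inr (.last k))) 1 +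
        .single (.inl ⟨n - k + i, by omega⟩) (.inr (.inr i.castSucc)) 1 +
        .single (.inl 0) (.inr (.inl i)) 1 := by
    ext (c | c | c) (d | d | d) <;>
      simp only [coordMatrix, cR, Eb, Fb, ite_apply, Matrix.of_apply, Matrix.single_apply,
        Matrix.add_apply, Pi.zero_apply, Pi.neg_apply, Pi.add_apply, Pi.smul_apply, smul_eq_mul,
        Sum.inl.injEq, Sum.inr.injEq, reduceCtorEq, Fin.ext_iff] <;> grind
  simp only [brkR_apply, h, Matrix.add_mulVec, dotProduct_add, dotProduct_single_mulVec, one_mul]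
  ring

theorem brkR_leibniz_apply_f (x y z : LR n k) (i : Fin k) :
    brkR n k x (brkR n k y z) (.inr (.inl i)) =
      brkR n k (brkR n k x y) z (.inr (.inl i)) - brkR n k (brkR n k x z) y (.inr (.inl i)) := by
  simp only [brkR_apply_f, brkR_apply_y]
  ring

theorem eq_zero_or_succ_or_tail [NeZero n] [NeZero k] (hkn : k ≤ n) (c : Fin n) :
    c = 0 ∨ (∃ a : Fin n, (c : ℕ) = a + 1 ∧ (c : ℕ) ≤ n - k) ∨
      ∃ i : Fin k, i ≠ 0 ∧ c = ⟨n - k + i, by omega⟩ := by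
  by_cases h0 : c = 0
  · exact .inl h0
  have := Fin.val_ne_zero_iff.2 h0
  rcases le_or_gt (c : ℕ) (n - k) with hle | hlt
  · exact .inr (.inl ⟨⟨c - 1, by omega⟩, by grind, hle⟩)
  · exact .inr (.inr ⟨⟨c - (n - k), by omega⟩, by grind, by grind⟩)

theorem brkR_leibniz_apply_e [NeZero n] [NeZero k] (hkn : k ≤ n) (x y z : LR n k) (c : Fin n) :
    brkR n k x (brkR n k y z) (.inl c) =
      brkR n k (brkR n k x y) z (.inl c) - brkR n k (brkR n k x z) y (.inl c) := by
  obtain rfl | ⟨b, hbc, hc⟩ | ⟨i, hi, rfl⟩ := eq_zero_or_succ_or_tail hkn c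
  · simp only [brkR_apply_e_zero, brkR_apply_y]
    ring
  · simp only [brkR_apply_e_succ hbc hc, brkR_apply_f, brkR_apply_y, Fin.castSucc_zero']
    obtain rfl | ⟨a, hab, hb⟩ | ⟨i, _, rfl⟩ := eq_zero_or_succ_or_tail hkn b
    · simp only [brkR_apply_e_zero, hbc, Fin.coe_ofNat_eq_mod, Nat.zero_mod, zero_add, Nat.cast_one,
        mul_zero, add_zero]
      ring
    · simp only [brkR_apply_e_succ hab hb, hbc, Nat.cast_add, Nat.cast_one]
      ring
    · have : (c : ℕ) = n - k + i + 1 := hbc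
      omega
  · simp only [brkR_apply_e_tail hkn hi, brkR_apply_e_zero, brkR_apply_f, brkR_apply_y]
    ring

theorem brkR_leibniz [NeZero n] [NeZero k] (hkn : k ≤ n) (x y z : LR n k) :
    brkR n k x (brkR n k y z) =
      brkR n k (brkR n k x y) z - brkR n k (brkR n k x z) y := by
  ext (c | i | j)
  · exact brkR_leibniz_apply_e hkn x y z c
  · exact brkR_leibniz_apply_f x y z i
  · simp [brkR_apply_y]

/-- The span of the `e`'s and the `f`'s, cut out by the vanishing of the `y`-coordinates; it
contains the derived algebra. -/
def efSpan (n k : ℕ) : Submodule ℂ (LR n k) :=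
  .pi (Set.range (Sum.inr ∘ Sum.inr)) fun _ => ⊥

/-- The span of the `e`'s, cut out by the vanishing of all other coordinates; multiplying by its
elements on the right gives zero. -/
def eSpan (n k : ℕ) : Submodule ℂ (LR n k) :=
  .pi (Set.range Sum.inr) fun _ => ⊥

theorem mem_efSpan {x : LR n k} : x ∈ efSpan n k ↔ ∀ j, x (.inr (.inr j)) = 0 := by
  simp [efSpan]

theorem mem_eSpan {x : LR n k} : x ∈ eSpan n k ↔ ∀ i, x (.inr i) = 0 := by
  simp [eSpan]

theorem brkR_mem_efSpan (x y : LR n k) : brkR n k x y ∈ efSpan n k :=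
  mem_efSpan.2 (brkR_apply_y x y)

theorem brkR_mem_eSpan {x y : LR n k} (hx : x ∈ efSpan n k) (hy : y ∈ efSpan n k) :
    brkR n k x y ∈ eSpan n k := by
  rw [mem_efSpan] at hx hy
  rw [mem_eSpan]
  rintro (i | j)
  · simp [brkR_apply_f, hx, hy]
  · exact brkR_apply_y x y j

theorem brkR_eq_zero_of_mem_eSpan (x : LR n k) {y : LR n k} (hy : y ∈ eSpan n k) :
    brkR n k x y = 0 := by
  rw [mem_eSpan] at hy
  refine Finset.sum_eq_zero fun i _ => Finset.sum_eq_zero fun j _ => ?_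
  rcases j with j | j
  · rcases i with i | i | i <;> simp [cR]
  · simp [hy]

theorem derR_succ_le {s : ℕ} {V W : Submodule ℂ (LR n k)} (hV : derR n k s ≤ V)
    (h : ∀ u ∈ V, ∀ v ∈ V, brkR n k u v ∈ W) : derR n k (s + 1) ≤ W := by
  rw [derR, Submodule.span_le]
  rintro _ ⟨u, hu, v, hv, rfl⟩
  exact h u (hV hu) v (hV hv)

theorem derR_one_le (n k : ℕ) : derR n k 1 ≤ efSpan n k :=
  derR_succ_le le_top fun u _ v _ => brkR_mem_efSpan u v

theorem derR_two_le (n k : ℕ) : derR n k 2 ≤ eSpan n k :=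
  derR_succ_le (derR_one_le n k) fun _ hu _ hv => brkR_mem_eSpan hu hv

theorem derR_three (n k : ℕ) : derR n k 3 = ⊥ :=
  le_bot_iff.1 <| derR_succ_le (derR_two_le n k) fun u _ _ hv =>
    (Submodule.mem_bot ℂ).2 (brkR_eq_zero_of_mem_eSpan u hv)

theorem Rn_solvable_Leibniz_general (n k : ℕ) (hk : 1 ≤ k) (hkn : k ≤ n) :
    (∀ x y z : LR n k,
      brkR n k x (brkR n k y z)
        = brkR n k (brkR n k x y) z - brkR n k (brkR n k x z) y) ∧
    (∃ m : ℕ, derR n k m = ⊥) := by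
  have : NeZero k := ⟨by omega⟩
  have : NeZero n := ⟨by omega⟩
  exact ⟨brkR_leibniz hkn, 3, derR_three n k⟩

/-- `R_n` is a solvable Leibniz algebra: it satisfies the Leibniz identity and
its derived series reaches zero. -/
theorem Rn_solvable_Leibniz (n k : ℕ) (hk : 1 ≤ k) (hn : 2 * k + 2 ≤ n) :
    (∀ x y z : LR n k,
      brkR n k x (brkR n k y z)
        = brkR n k (brkR n k x y) z - brkR n k (brkR n k x z) y) ∧
    (∃ m : ℕ, derR n k m = ⊥) :=
  Rn_solvable_Leibniz_general n k hk (by omega)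

end
end

section
/- Every derivation d of the solvable Leibniz algebra R_n has the form: d(e₁) = a e₁ - c₁ e₂ - Σ_{i=2}^{k} cᵢ e_{n-k+i}; d(eᵢ) = (a + (i-1)b₁) eᵢ - c₁ e_{i+1} for 2 ≤ i ≤ n-k; d(e_{n-k+1}) = (a + (n-k)b₁) e_{n-k+1}; d(e_{n-k+i}) = (a + bᵢ) e_{n-k+i} for 2 ≤ i ≤ k; d(fᵢ) = bᵢ fᵢ; d(yᵢ) = cᵢ fᵢ for 1 ≤ i ≤ k, and d(y_{k+1}) = 0, for some scalars a, b₁,…,b_k, c₁,…,c_k. -/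
noncomputable section

open Finset

/-!
Right multiplication by each `y` is diagonal, and the bracket is homogeneous for the resulting
weights. The weights of the `e`'s and `f`'s are pairwise distinct and nonzero, while the `y`'s
have weight zero. Comparing coefficients in `d [t, y_b] = [d t, y_b] + [t, d y_b]` for basis
vectors `t` gives `d yᵢ = cᵢ fᵢ` and `d y_{k+1} = 0`: the coefficient of `t` itself shows that the
toral part of `d y_b` is annihilated by all weights, which span. Correcting `d` by the inner
derivation `[·, ∑ cᵢ fᵢ]` makes it vanish on every `y`, so that it preserves weights and is
diagonal on the `e`'s and `f`'s. Homogeneity makes the diagonal entries additive along brackets.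
-/

namespace LR

variable {n k : ℕ}

/-- Index set of the basis of `R_n`: `.inl a`, `.inr (.inl a)` and `.inr (.inr b)` stand for
`e_{a+1}`, `f_{a+1}` and `y_{b+1}`. -/
abbrev Idx (n k : ℕ) := Fin n ⊕ (Fin k ⊕ Fin (k + 1))

/-- The basis of `R_n`, indexed by `Idx n k` instead of by the three families `Eb`, `Fb`, `Yb`. -/
abbrev basisVec (t : Idx n k) : LR n k := Pi.single t 1

/-- Weights of the basis of `R_n` under the torus spanned by the `y`'s: `[t, y_{b+1}]` is
`weight b t` times the basis vector `t`. -/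
def weight (b : Fin (k + 1)) : Idx n k → ℂ
  | .inl a =>
      (if (b : ℕ) = k then 1 else 0) + (if (b : ℕ) = 0 ∧ (a : ℕ) ≤ n - k then (a : ℂ) else 0)
        + (if 1 ≤ (b : ℕ) ∧ (a : ℕ) = n - k + b then 1 else 0)
  | .inr (.inl a) => if (a : ℕ) = b then 1 else 0
  | .inr (.inr _) => 0

/-- Derivations of `R_n`, with the usual product rule on both arguments. -/
def IsDerivation (d : LR n k →ₗ[ℂ] LR n k) : Prop :=
  ∀ u v, d (brkR n k u v) = brkR n k (d u) v + brkR n k u (d v)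

/-- The diagonal entries of `d`: the paper's `a` at `t = e₁` and `bᵢ` at `t = fᵢ`. -/
def diagCoeff (d : LR n k →ₗ[ℂ] LR n k) (t : Idx n k) : ℂ := d (basisVec t) t

/-- The coefficient of `fᵢ` in `d(yᵢ)`: the paper's `cᵢ`, with `i = a + 1`. -/
def innerCoeff (d : LR n k →ₗ[ℂ] LR n k) (a : Fin k) : ℂ :=
  d (basisVec (.inr (.inr a.castSucc))) (.inr (.inl a))

lemma exists_extension_add_one {α : Type*} [Nonempty α] (g : Fin k → α) :
    ∃ c : ℕ → α, ∀ j : Fin k, c (j + 1) = g j :=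
  ⟨Function.extend (fun j : Fin k => (j : ℕ) + 1) g fun _ => Classical.arbitrary α,
    (Nat.succ_injective.comp Fin.val_injective).extend_apply g _⟩

lemma Eb_add_one (a : Fin n) : Eb n k (a + 1) = basisVec (.inl a) := by
  ext (s | s | s) <;> simp [Eb, Pi.single_apply, Fin.ext_iff]

lemma Fb_add_one (a : Fin k) : Fb n k (a + 1) = basisVec (.inr (.inl a)) := by
  ext (s | s | s) <;> simp [Fb, Pi.single_apply, Fin.ext_iff]

lemma Yb_add_one (b : Fin (k + 1)) : Yb n k (b + 1) = basisVec (.inr (.inr b)) := by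
  ext (s | s | s) <;> simp [Yb, Pi.single_apply, Fin.ext_iff]

lemma brkR_basisVec_left (i : Idx n k) (v : LR n k) :
    brkR n k (basisVec i) v = ∑ j, v j • cR n k i j := by
  rw [brkR, Finset.sum_eq_single i] <;> simp +contextual

lemma brkR_basisVec_right (u : LR n k) (j : Idx n k) :
    brkR n k u (basisVec j) = ∑ i, u i • cR n k i j := by
  rw [brkR, Finset.sum_comm, Finset.sum_eq_single j] <;> simp +contextual

lemma brkR_basisVec_smul_basisVec (i j : Idx n k) (r : ℂ) :
    brkR n k (basisVec i) (r • basisVec j) = r • cR n k i j := by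
  rw [brkR_basisVec_left, Finset.sum_eq_single j] <;> simp +contextual

lemma brkR_basisVec_basisVec (i j : Idx n k) :
    brkR n k (basisVec i) (basisVec j) = cR n k i j := by
  simpa using brkR_basisVec_smul_basisVec i j 1

lemma cR_y (t : Idx n k) (b : Fin (k + 1)) :
    cR n k t (.inr (.inr b)) = weight b t • basisVec t := by
  rcases t with a | a | a
  · have h : (1 ≤ (b : ℕ) ∧ (b : ℕ) + 1 ≤ k ∧ (a : ℕ) + 1 = n - k + b + 1) ↔
        1 ≤ (b : ℕ) ∧ (a : ℕ) = n - k + b := by omega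
    simp only [cR, weight, Eb_add_one, h, add_le_add_iff_right, add_smul, ite_smul, one_smul,
      zero_smul]
  · simp only [cR, weight, Fb_add_one, ite_smul, one_smul, zero_smul]
  · simp [cR, weight]

lemma brkR_y_apply (u : LR n k) (b : Fin (k + 1)) (s : Idx n k) :
    brkR n k u (basisVec (.inr (.inr b))) s = weight b s * u s := by
  simp [brkR_basisVec_right, cR_y, Finset.sum_apply, Pi.single_apply, mul_comm]

lemma weight_of_cR_f_ne_zero (b : Fin (k + 1)) {t s : Idx n k} {a : Fin k}
    (h : cR n k t (.inr (.inl a)) s ≠ 0) :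
    weight b s = weight b t + if (a : ℕ) = b then 1 else 0 := by
  rcases t with t | t | t
  · rcases s with s | s | s
    · have indices : (a : ℕ) = 0 ∧ (t : ℕ) + 1 ≤ n - k ∧ (s : ℕ) = t + 1 ∨
          1 ≤ (a : ℕ) ∧ (t : ℕ) = 0 ∧ (s : ℕ) = n - k + a := by
        contrapose! h
        simp only [cR, Pi.add_apply]
        split_ifs <;> simp [Eb] <;> omega
      rcases indices with ⟨ha, ht, hs⟩ | ⟨ha, ht, hs⟩
      · simp only [weight, ha, hs]
        split_ifs <;> first | omega | (push_cast; ring)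
      · simp only [weight, ht, hs]
        split_ifs <;> first | omega | simp
    · simp [cR, Eb, ite_apply] at h
    · simp [cR, Eb, ite_apply] at h
  · simp [cR] at h
  · rcases s with s | s | s
    · simp [cR, Fb, ite_apply] at h
    · have ht : (t : ℕ) = a := by
        by_contra ht
        simp [cR, ht] at h
      have hs : (s : ℕ) = a := by
        by_contra hs
        simp [cR, Fb, ht, hs] at h
      simp [weight, hs]
    · simp [cR, Fb, ite_apply] at h

lemma cR_f_apply_self (t : Idx n k) (a : Fin k) : cR n k t (.inr (.inl a)) t = 0 := by
  by_contra h
  simpa using weight_of_cR_f_ne_zero a.castSucc h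

lemma sum_smul_cR_e_f (hk : 1 ≤ k) (c : ℕ → ℂ) (a : Fin n) :
    ∑ j : Fin k, c (j + 1) • cR n k (.inl a) (.inr (.inl j)) =
      (if (a : ℕ) + 1 ≤ n - k then c 1 • Eb n k (a + 2) else 0) +
        if (a : ℕ) = 0 then ∑ i ∈ Finset.Icc 2 k, c i • Eb n k (n - k + i) else 0 := by
  have tail : ∑ i ∈ Finset.Icc 2 k, c i • Eb n k (n - k + i) =
      ∑ j ∈ Finset.Ico 1 k, c (j + 1) • Eb n k (n - k + j + 1) :=
    (Finset.sum_Ico_add' (fun i => c i • Eb n k (n - k + i)) 1 k 1).symm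
  simp only [cR]
  rw [Fin.sum_univ_eq_sum_range (fun j => c (j + 1) •
      ((if j = 0 ∧ (a : ℕ) + 1 ≤ n - k then Eb n k (a + 2) else 0) +
        if (a : ℕ) = 0 ∧ 1 ≤ j then Eb n k (n - k + j + 1) else 0)) k,
    Finset.range_eq_Ico, Finset.sum_eq_sum_Ico_succ_bot hk, tail]
  congr 1
  · simp
  · trans ∑ j ∈ Finset.Ico 1 k, if (a : ℕ) = 0 then c (j + 1) • Eb n k (n - k + j + 1) else 0
    · refine Finset.sum_congr rfl fun j hj => ?_
      have hj1 : 1 ≤ j := (Finset.mem_Ico.mp hj).1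
      simp [hj1, Nat.one_le_iff_ne_zero.mp hj1]
    · split_ifs <;> simp

lemma weight_last_e (hk : 1 ≤ k) (a : Fin n) : weight (Fin.last k) (.inl a : Idx n k) = 1 := by
  have ha := a.isLt
  simp only [weight, Fin.val_last, if_true]
  split_ifs <;> first | omega | simp

lemma weight_e_zero (hn : 0 < n) (b : Fin (k + 1)) :
    weight b (.inl ⟨0, hn⟩ : Idx n k) = if b = Fin.last k then 1 else 0 := by
  simp only [weight, Fin.ext_iff, Fin.val_last]
  split_ifs <;> first | omega | simp

lemma exists_weight_e_ne (hk : 1 ≤ k) {a a' : Fin n} (h : a < a') :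
    ∃ b : Fin (k + 1), weight b (.inl a : Idx n k) ≠ weight b (.inl a') := by
  have := a'.isLt
  by_cases hle : (a' : ℕ) ≤ n - k
  · refine ⟨0, ?_⟩
    have hle' : (a : ℕ) ≤ n - k := by omega
    simpa [weight, hle, hle', Nat.cast_inj, Fin.val_inj] using h.ne
  · refine ⟨⟨a' - (n - k), by omega⟩, ?_⟩
    simp only [weight]
    split_ifs <;> first | omega | simp

lemma exists_weight_ne (hk : 1 ≤ k) {t s : Idx n k} (ht : ∀ b, t ≠ .inr (.inr b)) (hts : t ≠ s) :
    ∃ b, weight b t ≠ weight b s := by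
  rcases t with a | a | b
  · rcases s with a' | a' | b'
    · rcases lt_or_gt_of_ne (fun h => hts (congrArg _ h) : a ≠ a') with h | h
      · exact exists_weight_e_ne hk h
      · exact (exists_weight_e_ne hk h).imp fun _ => Ne.symm
    · exact ⟨Fin.last k, by rw [weight_last_e hk]; simp [weight, a'.isLt.ne]⟩
    · exact ⟨Fin.last k, by rw [weight_last_e hk]; simp [weight]⟩
  · rcases s with a' | a' | b'
    · exact ⟨Fin.last k, by rw [weight_last_e hk]; simp [weight, a.isLt.ne]⟩
    · have h : a' ≠ a := fun h => hts (by rw [h])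
      exact ⟨a.castSucc, by simp [weight, Fin.val_inj, h]⟩
    · exact ⟨a.castSucc, by simp [weight]⟩
  · exact absurd rfl (ht b)

lemma brkR_y_left_apply_e (b : Fin (k + 1)) (v : LR n k) (a : Fin n) :
    brkR n k (basisVec (.inr (.inr b))) v (.inl a) = 0 := by
  simp [brkR_basisVec_left, cR, Fb, ite_apply]

lemma brkR_y_left_apply_f (a : Fin k) (v : LR n k) :
    brkR n k (basisVec (.inr (.inr a.castSucc))) v (.inr (.inl a)) = -v (.inr (.inl a)) := by
  simp [brkR_basisVec_left, cR, Fb, ite_apply, Fin.val_inj]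

lemma brkR_basisVec_apply_self (t : Idx n k) (v : LR n k) :
    brkR n k (basisVec t) v t = ∑ b, weight b t * v (.inr (.inr b)) := by
  have h (a : Fin n) : cR n k t (.inl a) t = 0 := by rcases t with _ | _ | _ <;> simp [cR]
  simp [brkR_basisVec_left, h, cR_f_apply_self, cR_y, mul_comm]

namespace IsDerivation

variable {d : LR n k →ₗ[ℂ] LR n k}

lemma weight_sub_mul (hd : IsDerivation d) (b : Fin (k + 1)) (t s : Idx n k) :
    (weight b t - weight b s) * d (basisVec t) s =
      brkR n k (basisVec t) (d (basisVec (.inr (.inr b)))) s := by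
  have h := congrFun (hd (basisVec t) (basisVec (.inr (.inr b)))) s
  rw [brkR_basisVec_basisVec, cR_y, map_smul, Pi.smul_apply, smul_eq_mul, Pi.add_apply,
    brkR_y_apply] at h
  linear_combination h

lemma map_y_apply_e (hk : 1 ≤ k) (hd : IsDerivation d) (b : Fin (k + 1)) (a : Fin n) :
    d (basisVec (.inr (.inr b))) (.inl a) = 0 := by
  have h := hd.weight_sub_mul (Fin.last k) (.inr (.inr b)) (.inl a)
  rw [brkR_y_left_apply_e, weight_last_e hk] at h
  simpa [weight] using h

lemma map_y_apply_f (hd : IsDerivation d) (b : Fin (k + 1)) (a : Fin k) :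
    d (basisVec (.inr (.inr b))) (.inr (.inl a)) = if (a : ℕ) = b then innerCoeff d a else 0 := by
  have h := hd.weight_sub_mul b (.inr (.inr a.castSucc)) (.inr (.inl a))
  rw [brkR_y_left_apply_f, ← innerCoeff] at h
  simpa [weight] using h.symm

lemma sum_weight_mul_map_y (hd : IsDerivation d) (b : Fin (k + 1)) (t : Idx n k) :
    ∑ b', weight b' t * d (basisVec (.inr (.inr b))) (.inr (.inr b')) = 0 := by
  rw [← brkR_basisVec_apply_self, ← hd.weight_sub_mul, sub_self, zero_mul]

lemma map_y_apply_y (hn : 0 < n) (hd : IsDerivation d) (b b' : Fin (k + 1)) :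
    d (basisVec (.inr (.inr b))) (.inr (.inr b')) = 0 := by
  induction b' using Fin.lastCases with
  | last => simpa [weight_e_zero] using hd.sum_weight_mul_map_y b (.inl ⟨0, hn⟩)
  | cast a =>
    have h := hd.sum_weight_mul_map_y b (.inr (.inl a))
    simpa [weight, Fin.sum_univ_castSucc, Fin.val_inj, a.isLt.ne] using h

lemma map_y_castSucc (hk : 1 ≤ k) (hn : 0 < n) (hd : IsDerivation d) (a : Fin k) :
    d (basisVec (.inr (.inr a.castSucc))) = innerCoeff d a • basisVec (.inr (.inl a)) := by
  ext (s | s | s)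
  · simp [hd.map_y_apply_e hk]
  · rcases eq_or_ne s a with rfl | h <;> simp [hd.map_y_apply_f, Fin.val_inj, *]
  · simp [hd.map_y_apply_y hn]

lemma map_y_last (hk : 1 ≤ k) (hn : 0 < n) (hd : IsDerivation d) :
    d (basisVec (.inr (.inr (Fin.last k)))) = 0 := by
  ext (s | s | s)
  · simp [hd.map_y_apply_e hk]
  · simp [hd.map_y_apply_f, s.isLt.ne]
  · simp [hd.map_y_apply_y hn]

lemma brkR_map_y (hk : 1 ≤ k) (hn : 0 < n) (hd : IsDerivation d) (t : Idx n k)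
    (b : Fin (k + 1)) :
    brkR n k (basisVec t) (d (basisVec (.inr (.inr b)))) =
      ∑ a : Fin k, (if (a : ℕ) = b then innerCoeff d a else 0) • cR n k t (.inr (.inl a)) := by
  simp [brkR_basisVec_left, hd.map_y_apply_e hk, hd.map_y_apply_f, hd.map_y_apply_y hn]

lemma map_basisVec (hk : 1 ≤ k) (hn : 0 < n) (hd : IsDerivation d) {t : Idx n k}
    (ht : ∀ b, t ≠ .inr (.inr b)) :
    d (basisVec t) = diagCoeff d t • basisVec t -
      ∑ a : Fin k, innerCoeff d a • cR n k t (.inr (.inl a)) := by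
  ext s
  simp only [Pi.sub_apply, Pi.smul_apply, Finset.sum_apply, smul_eq_mul]
  rcases eq_or_ne t s with rfl | hts
  · simp [diagCoeff, cR_f_apply_self]
  have off_diag : basisVec t s = 0 := Pi.single_eq_of_ne hts.symm 1
  obtain ⟨b, hb⟩ := exists_weight_ne hk ht hts
  have shift (a : Fin k) : (weight b t - weight b s) * cR n k t (.inr (.inl a)) s =
      -((if (a : ℕ) = b then 1 else 0) * cR n k t (.inr (.inl a)) s) := by
    by_cases h : cR n k t (.inr (.inl a)) s = 0
    · simp [h]
    · rw [weight_of_cR_f_ne_zero b h]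
      ring
  apply mul_left_cancel₀ (sub_ne_zero.mpr hb)
  rw [hd.weight_sub_mul, hd.brkR_map_y hk hn, off_diag, mul_zero, zero_sub,
    mul_neg, Finset.mul_sum, ← Finset.sum_neg_distrib, Finset.sum_apply]
  refine Finset.sum_congr rfl fun a _ => ?_
  rw [mul_left_comm, shift, Pi.smul_apply, smul_eq_mul, ← mul_boole]
  ring

lemma map_f (hk : 1 ≤ k) (hn : 0 < n) (hd : IsDerivation d) (a : Fin k) :
    d (basisVec (.inr (.inl a))) = diagCoeff d (.inr (.inl a)) • basisVec (.inr (.inl a)) := by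
  rw [hd.map_basisVec hk hn (by simp)]
  simp [cR]

lemma diagCoeff_eq_add (hk : 1 ≤ k) (hn : 0 < n) (hd : IsDerivation d) {t s : Idx n k} {a : Fin k}
    (ht : ∀ b, t ≠ .inr (.inr b)) (h : cR n k t (.inr (.inl a)) = basisVec s) :
    diagCoeff d s = diagCoeff d t + diagCoeff d (.inr (.inl a)) := by
  have ht1 : cR n k t (.inr (.inl a)) s = 1 := by simp [h]
  have right : brkR n k (d (basisVec t)) (basisVec (.inr (.inl a))) s = diagCoeff d t := by
    rw [brkR_basisVec_right, Finset.sum_apply, Finset.sum_eq_single t]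
    · simp [ht1, diagCoeff]
    · intro i _ hi
      obtain ⟨b, hb⟩ := exists_weight_ne hk ht hi.symm
      have hi0 : cR n k i (.inr (.inl a)) s = 0 := by
        by_contra h0
        have ht0 : cR n k t (.inr (.inl a)) s ≠ 0 := by simp [ht1]
        have hw := weight_of_cR_f_ne_zero b h0
        rw [weight_of_cR_f_ne_zero b ht0] at hw
        exact hb (add_right_cancel hw)
      simp [hi0]
    · simp
  have hst := congrFun (hd (basisVec t) (basisVec (.inr (.inl a)))) s
  rw [brkR_basisVec_basisVec, h, Pi.add_apply, right, hd.map_f hk hn,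
    brkR_basisVec_smul_basisVec, Pi.smul_apply, ht1] at hst
  simpa [diagCoeff] using hst

lemma diagCoeff_e (hk : 1 ≤ k) (hd : IsDerivation d) (m : ℕ) (hm : m ≤ n - k) (hmn : m < n) :
    diagCoeff d (.inl ⟨m, hmn⟩) =
      diagCoeff d (.inl ⟨0, by omega⟩) + m * diagCoeff d (.inr (.inl ⟨0, hk⟩)) := by
  induction m with
  | zero => simp
  | succ m ih =>
    have bracket : cR n k (.inl ⟨m, by omega⟩) (.inr (.inl ⟨0, hk⟩)) =
        basisVec (.inl ⟨m + 1, hmn⟩) := by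
      simp [cR, hm, ← Eb_add_one]
    rw [hd.diagCoeff_eq_add hk (by omega) (by simp) bracket, ih (by omega) (by omega)]
    push_cast
    ring

lemma diagCoeff_e_tail (hk : 1 ≤ k) (hkn : k ≤ n) (hd : IsDerivation d) (j : Fin k)
    (hj : 1 ≤ (j : ℕ)) :
    diagCoeff d (.inl ⟨n - k + j, by omega⟩) =
      diagCoeff d (.inl ⟨0, by omega⟩) + diagCoeff d (.inr (.inl j)) := by
  have bracket : cR n k (.inl ⟨0, by omega⟩) (.inr (.inl j)) =
      basisVec (.inl ⟨n - k + j, by omega⟩) := by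
    have hj0 : (j : ℕ) ≠ 0 := by omega
    simp [cR, hj, hj0, ← Eb_add_one]
  exact hd.diagCoeff_eq_add hk (by omega) (by simp) bracket

lemma map_Eb (hk : 1 ≤ k) (hd : IsDerivation d) {c : ℕ → ℂ}
    (hc : ∀ j : Fin k, c (j + 1) = innerCoeff d j) (a : Fin n) :
    d (Eb n k (a + 1)) = diagCoeff d (.inl a) • Eb n k (a + 1) -
      ((if (a : ℕ) + 1 ≤ n - k then c 1 • Eb n k (a + 2) else 0) +
        if (a : ℕ) = 0 then ∑ i ∈ Finset.Icc 2 k, c i • Eb n k (n - k + i) else 0) := by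
  rw [Eb_add_one, hd.map_basisVec hk a.pos (by simp), ← sum_smul_cR_e_f hk]
  simp only [hc]

end IsDerivation

end LR

theorem derivations_of_Rn_general (n k : ℕ) (hk : 1 ≤ k) (hn : k < n)
    (d : LR n k →ₗ[ℂ] LR n k)
    (hd : ∀ u v : LR n k, d (brkR n k u v) = brkR n k (d u) v + brkR n k u (d v)) :
    ∃ (a : ℂ) (b c : ℕ → ℂ),
      d (Eb n k 1) = a • Eb n k 1 - c 1 • Eb n k 2
          - ∑ i ∈ Finset.Icc 2 k, c i • Eb n k (n - k + i) ∧
      (∀ i : ℕ, 2 ≤ i → i ≤ n - k →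
        d (Eb n k i) = (a + ((i : ℂ) - 1) * b 1) • Eb n k i - c 1 • Eb n k (i + 1)) ∧
      d (Eb n k (n - k + 1)) = (a + ((n - k : ℕ) : ℂ) * b 1) • Eb n k (n - k + 1) ∧
      (∀ i : ℕ, 2 ≤ i → i ≤ k →
        d (Eb n k (n - k + i)) = (a + b i) • Eb n k (n - k + i)) ∧
      (∀ i : ℕ, 1 ≤ i → i ≤ k → d (Fb n k i) = b i • Fb n k i) ∧
      (∀ i : ℕ, 1 ≤ i → i ≤ k → d (Yb n k i) = c i • Fb n k i) ∧
      d (Yb n k (k + 1)) = 0 := by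
  have hd : LR.IsDerivation d := hd
  have hn0 : 0 < n := by omega
  obtain ⟨b, hb⟩ := LR.exists_extension_add_one fun j : Fin k => LR.diagCoeff d (.inr (.inl j))
  obtain ⟨c, hc⟩ := LR.exists_extension_add_one (LR.innerCoeff d)
  have hb1 : b 1 = _ := hb ⟨0, hk⟩
  refine ⟨LR.diagCoeff d (.inl ⟨0, hn0⟩), b, c, ?_, fun i h2 hi => ?_, ?_, fun i h2 hi => ?_,
    fun i h1 hi => ?_, fun i h1 hi => ?_, ?_⟩
  · have h := hd.map_Eb hk hc ⟨0, hn0⟩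
    simpa [show 1 ≤ n - k by omega, sub_sub] using h
  · obtain ⟨m, rfl⟩ := Nat.exists_eq_add_of_le' (show 1 ≤ i by omega)
    have h := hd.map_Eb hk hc ⟨m, by omega⟩
    rw [hd.diagCoeff_e hk m (by omega)] at h
    simpa [hi, hb1, show m ≠ 0 by omega] using h
  · have h := hd.map_Eb hk hc ⟨n - k, by omega⟩
    rw [hd.diagCoeff_e hk _ le_rfl] at h
    simpa [hb1, show n - k ≠ 0 by omega] using h
  · obtain ⟨m, rfl⟩ := Nat.exists_eq_add_of_le' (show 1 ≤ i by omega)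
    have h := hd.map_Eb hk hc ⟨n - k + m, by omega⟩
    rw [hd.diagCoeff_e_tail hk hn.le ⟨m, by omega⟩ (Nat.le_of_succ_le_succ h2), ← hb] at h
    simpa [show m ≠ 0 by omega, ← add_assoc, show ¬ n - k + m + 1 ≤ n - k by omega] using h
  · obtain ⟨m, rfl⟩ := Nat.exists_eq_add_of_le' h1
    simpa [← LR.Fb_add_one, ← hb] using hd.map_f hk hn0 ⟨m, by omega⟩
  · obtain ⟨m, rfl⟩ := Nat.exists_eq_add_of_le' h1
    simpa [← LR.Fb_add_one, ← LR.Yb_add_one, ← hc] using hd.map_y_castSucc hk hn0 ⟨m, by omega⟩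
  · simpa [← LR.Yb_add_one] using hd.map_y_last hk hn0

/-- Every derivation `d` of the solvable Leibniz algebra `R_n` has the form
`d(e₁) = a e₁ - c₁ e₂ - Σ_{i=2}^{k} cᵢ e_{n-k+i}`,
`d(eᵢ) = (a + (i-1)b₁) eᵢ - c₁ e_{i+1}` (2 ≤ i ≤ n-k),
`d(e_{n-k+1}) = (a + (n-k)b₁) e_{n-k+1}`,
`d(e_{n-k+i}) = (a + bᵢ) e_{n-k+i}` (2 ≤ i ≤ k),
`d(fᵢ) = bᵢ fᵢ`, `d(yᵢ) = cᵢ fᵢ` (1 ≤ i ≤ k), `d(y_{k+1}) = 0`. -/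
theorem derivations_of_Rn (n k : ℕ) (hk : 1 ≤ k) (hn : 2 * k + 2 ≤ n)
    (d : LR n k →ₗ[ℂ] LR n k)
    (hd : ∀ u v : LR n k, d (brkR n k u v) = brkR n k (d u) v + brkR n k u (d v)) :
    ∃ (a : ℂ) (b c : ℕ → ℂ),
      d (Eb n k 1) = a • Eb n k 1 - c 1 • Eb n k 2
          - ∑ i ∈ Finset.Icc 2 k, c i • Eb n k (n - k + i) ∧
      (∀ i : ℕ, 2 ≤ i → i ≤ n - k →
        d (Eb n k i) = (a + ((i : ℂ) - 1) * b 1) • Eb n k i - c 1 • Eb n k (i + 1)) ∧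
      d (Eb n k (n - k + 1)) = (a + ((n - k : ℕ) : ℂ) * b 1) • Eb n k (n - k + 1) ∧
      (∀ i : ℕ, 2 ≤ i → i ≤ k →
        d (Eb n k (n - k + i)) = (a + b i) • Eb n k (n - k + i)) ∧
      (∀ i : ℕ, 1 ≤ i → i ≤ k → d (Fb n k i) = b i • Fb n k i) ∧
      (∀ i : ℕ, 1 ≤ i → i ≤ k → d (Yb n k i) = c i • Fb n k i) ∧
      d (Yb n k (k + 1)) = 0 := by
  exact derivations_of_Rn_general n k hk (by omega) d hd

end
end
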